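/- arXiv:2605.15754 — 2 statements merged into one kernel-verified Lean document; each statement's English description precedes it below -/
import Mathlib

section
/- Let K ⊂ ℝ^d, Ω ⊂ ℝⁿ be nonempty compact sets and T > 0. Let 𝒢 : C(K, ℝ) → C(Ω × [0,T], ℝ) be a continuous operator (with both function spaces carrying the uniform norm). Then for every compact subset 𝒦 ⊂ C(K, ℝ) and every ε > 0, there exist a positive integer N, continuous functionals b_i : C(K, ℝ) → ℝ, continuous spatial basis functions φ_i ∈ C(Ω, ℝ), and continuous temporal basis functions ψ_i ∈ C([0,T], ℝ) for i = 1, …, N, such that sup_{f ∈ 𝒦} sup_{(x,t) ∈ Ω × [0,T]} | 𝒢(f)(x,t) − Σ_{i=1}^N b_i(f)·φ_i(x)·ψ_i(t) | < ε. -/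
/-!
In a normed space, a partition of unity subordinate to small balls centred in a dense set
approximates the identity, uniformly on compact sets, by finite sums of continuous scalars times
centres. Applied to the compact range of the curried map `Y → C(Z, E)` of `F : C(Y × Z, E)`, this
shows that sums of functions `φ y • ψ z` are dense in `C(Y × Z, E)`. Applied a second time to the
compact set `𝒢 '' 𝒦 ⊆ C(Y × Z, E)`, with these sums as centres, it gives the continuous
functionals, which are thus functions of `f` through `𝒢 f` only.
-/

section FiniteRank

variable {E : Type*} [NormedAddCommGroup E] [NormedSpace ℝ E]

theorem exists_finset_sum_smul_near_of_dense {D C : Set E} (hD : Dense D) (hC : IsCompact C)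
    {ε : ℝ} (hε : 0 < ε) :
    ∃ (t : Finset D) (b : D → C(E, ℝ)), ∀ x ∈ C, ‖x - ∑ g ∈ t, b g x • (g : E)‖ < ε := by
  have balls_cover : Set.univ ⊆ ⋃ g : D, Metric.ball (g : E) ε := fun x _ ↦
    let ⟨g, hgD, hxg⟩ := hD.exists_dist_lt x hε
    Set.mem_iUnion.mpr ⟨⟨g, hgD⟩, hxg⟩
  obtain ⟨ρ, hρ⟩ := PartitionOfUnity.exists_isSubordinate isClosed_univ
    (fun g : D ↦ Metric.ball (g : E) ε) (fun _ ↦ Metric.isOpen_ball) balls_cover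
  have finite_meeting := ρ.locallyFinite.finite_nonempty_inter_compact hC
  refine ⟨finite_meeting.toFinset, ρ, fun x hx ↦ ?_⟩
  have sum_mem_ball : ∑ᶠ g : D, ρ g x • (g : E) ∈ Metric.ball x ε :=
    ρ.finsum_smul_mem_convex (g := fun g _ ↦ (g : E)) (Set.mem_univ x)
      (fun g hg ↦ Metric.mem_ball_comm.mp (hρ g (subset_closure hg))) (convex_ball x ε)
  have support_subset :
      (Function.support fun g : D ↦ ρ g x • (g : E)) ⊆ finite_meeting.toFinset := fun g hg ↦
    finite_meeting.mem_toFinset.mpr ⟨x, left_ne_zero_of_smul hg, hx⟩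
  rwa [finsum_eq_sum_of_support_subset _ support_subset, mem_ball_iff_norm'] at sum_mem_ball

theorem exists_finset_sum_smul_near_of_dense_span {ι : Type*} {v : ι → E} {C : Set E}
    (hv : Dense (Submodule.span ℝ (Set.range v) : Set E)) (hC : IsCompact C)
    {ε : ℝ} (hε : 0 < ε) :
    ∃ (s : Finset ι) (b : ι → C(E, ℝ)), ∀ x ∈ C, ‖x - ∑ i ∈ s, b i x • v i‖ < ε := by
  classical
  obtain ⟨t, b, hb⟩ := exists_finset_sum_smul_near_of_dense hv hC hε
  choose c hc using fun g : Submodule.span ℝ (Set.range v) ↦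
    Finsupp.mem_span_range_iff_exists_finsupp.mp g.2
  let s : Finset ι := t.biUnion fun g ↦ (c g).support
  refine ⟨s, fun i ↦ ∑ g ∈ t, c g i • b g, fun x hx ↦ ?_⟩
  have expand (g) (hg : g ∈ t) : (g : E) = ∑ i ∈ s, c g i • v i := by
    rw [← hc g]
    exact Finsupp.sum_of_support_subset _
      (Finset.subset_biUnion_of_mem (fun g ↦ (c g).support) hg) _ fun i _ ↦ zero_smul ℝ (v i)
  have regroup : ∑ i ∈ s, (∑ g ∈ t, c g i • b g) x • v i = ∑ g ∈ t, b g x • (g : E) :=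
    calc ∑ i ∈ s, (∑ g ∈ t, c g i • b g) x • v i
        = ∑ i ∈ s, ∑ g ∈ t, b g x • c g i • v i := by
          simp only [ContinuousMap.sum_apply, ContinuousMap.smul_apply, Finset.sum_smul,
            smul_smul, smul_eq_mul, mul_comm]
      _ = ∑ g ∈ t, ∑ i ∈ s, b g x • c g i • v i := Finset.sum_comm
      _ = ∑ g ∈ t, b g x • (g : E) :=
          Finset.sum_congr rfl fun g hg ↦ by rw [expand g hg, Finset.smul_sum]
  rw [regroup]
  exact hb x hx

end FiniteRank

section SeparatedVariables

variable {X Y Z E : Type*} [TopologicalSpace X] [TopologicalSpace Y] [TopologicalSpace Z]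
  [NormedAddCommGroup E] [NormedSpace ℝ E]

/-- The elementary tensor `φ ⊗ ψ`, a function of two variables in which these are separated. The
second factor carries the values in `E`. -/
def separatedProduct (φ : C(Y, ℝ)) (ψ : C(Z, E)) : C(Y × Z, E) where
  toFun p := φ p.1 • ψ p.2

variable [CompactSpace Y] [CompactSpace Z]

theorem dense_span_range_separatedProduct :
    Dense (Submodule.span ℝ (Set.range fun q : C(Y, ℝ) × C(Z, E) ↦ separatedProduct q.1 q.2) :
      Set C(Y × Z, E)) := by
  refine Metric.dense_iff.mpr fun F ε hε ↦ ?_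
  obtain ⟨t, b, hb⟩ := exists_finset_sum_smul_near_of_dense dense_univ
    (isCompact_range F.curry.continuous) hε
  refine ⟨∑ g ∈ t, separatedProduct ((b g).comp F.curry) g, ?_,
    Submodule.sum_mem _ fun g _ ↦ Submodule.subset_span ⟨((b g).comp F.curry, g), rfl⟩⟩
  rw [mem_ball_iff_norm', ContinuousMap.norm_lt_iff _ hε]
  rintro ⟨y, z⟩
  have slice_near := (ContinuousMap.norm_lt_iff _ hε).mp (hb (F.curry y) ⟨y, rfl⟩) z
  simpa [separatedProduct, ContinuousMap.sum_apply] using slice_near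

theorem piswno_universal_approximation_general {𝒢 : X → C(Y × Z, E)} (h𝒢 : Continuous 𝒢)
    {𝒦 : Set X} (h𝒦 : IsCompact 𝒦) {ε : ℝ} (hε : 0 < ε) :
    ∃ N : ℕ, 0 < N ∧
      ∃ (b : Fin N → (X → ℝ)) (φ : Fin N → C(Y, ℝ)) (ψ : Fin N → C(Z, E)),
        (∀ i, Continuous (b i)) ∧
        ∀ f ∈ 𝒦, ∀ p : Y × Z, ‖𝒢 f p - ∑ i, (b i f * φ i p.1) • ψ i p.2‖ < ε := by
  classical
  obtain ⟨s, b, hb⟩ := exists_finset_sum_smul_near_of_dense_span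
    (dense_span_range_separatedProduct (Y := Y) (Z := Z) (E := E)) (h𝒦.image h𝒢) hε
  -- The zero product is adjoined only to make the number of terms positive.
  let s₀ := insert (0 : C(Y, ℝ) × C(Z, E)) s
  let q (i : Fin s₀.card) : C(Y, ℝ) × C(Z, E) := s₀.equivFin.symm i
  refine ⟨s₀.card, (Finset.insert_nonempty _ _).card_pos, fun i f ↦ b (q i) (𝒢 f),
    fun i ↦ (q i).1, fun i ↦ (q i).2, fun i ↦ (b (q i)).continuous.comp h𝒢, fun f hf p ↦ ?_⟩
  have sum_eq : ∑ i, (b (q i) (𝒢 f) * (q i).1 p.1) • (q i).2 p.2 =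
      ∑ r ∈ s, (b r (𝒢 f) * r.1 p.1) • r.2 p.2 := by
    rw [s₀.equivFin.symm.sum_comp fun r : s₀ ↦ (b r (𝒢 f) * r.1.1 p.1) • r.1.2 p.2,
      Finset.sum_coe_sort s₀ fun r ↦ (b r (𝒢 f) * r.1 p.1) • r.2 p.2]
    exact Finset.sum_insert_of_eq_zero_if_notMem fun _ ↦ by simp
  rw [sum_eq]
  simpa [separatedProduct, ContinuousMap.sum_apply, mul_smul] using
    (ContinuousMap.norm_lt_iff _ hε).mp (hb (𝒢 f) ⟨f, hf, rfl⟩) p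

end SeparatedVariables

/-- **Universal approximation with spatiotemporally decoupled basis functions (PI-SWNO).**
Let `K ⊂ ℝ^d`, `Ω ⊂ ℝⁿ` be nonempty compact sets, `T > 0`, and let
`𝒢 : C(K, ℝ) → C(Ω × [0,T], ℝ)` be continuous (uniform-norm topologies). Then for every
compact `𝒦 ⊂ C(K, ℝ)` and every `ε > 0` there exist `N ≥ 1`, continuous functionals
`b_i`, spatial basis functions `φ_i ∈ C(Ω, ℝ)` and temporal basis functions
`ψ_i ∈ C([0,T], ℝ)` with `|𝒢 f (x,t) - ∑ i, b_i f * φ_i x * ψ_i t| < ε` uniformly over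
`f ∈ 𝒦` and `(x,t) ∈ Ω × [0,T]`. -/
theorem piswno_universal_approximation {d n : ℕ}
    (K : Set (EuclideanSpace ℝ (Fin d))) (hKc : IsCompact K) (hKne : K.Nonempty)
    (Ω : Set (EuclideanSpace ℝ (Fin n))) (hΩc : IsCompact Ω) (hΩne : Ω.Nonempty)
    (T : ℝ) (hT : 0 < T)
    (𝒢 : C(K, ℝ) → C(Ω × Set.Icc (0 : ℝ) T, ℝ)) (h𝒢 : Continuous 𝒢)
    (𝒦 : Set C(K, ℝ)) (h𝒦 : IsCompact 𝒦) (ε : ℝ) (hε : 0 < ε) :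
    ∃ N : ℕ, 0 < N ∧
      ∃ (b : Fin N → (C(K, ℝ) → ℝ)) (φ : Fin N → C(Ω, ℝ))
        (ψ : Fin N → C(Set.Icc (0 : ℝ) T, ℝ)),
        (∀ i, Continuous (b i)) ∧
        ∀ f ∈ 𝒦, ∀ p : Ω × Set.Icc (0 : ℝ) T,
          |𝒢 f p - ∑ i, b i f * φ i p.1 * ψ i p.2| < ε := by
  have : CompactSpace Ω := isCompact_iff_compactSpace.mp hΩc
  exact piswno_universal_approximation_general h𝒢 h𝒦 hε
end

section
/- Let K ⊂ ℝ^d and Ω ⊂ ℝⁿ be nonempty compact sets and T > 0. Let 𝒢 : C(K, ℝ) → C(Ω × [0,T], ℝ) be a continuous operator with respect to the uniform norms. Then for every compact subset 𝒦 ⊂ C(K, ℝ) and every ε > 0, there exist a positive integer n, continuous functionals b_i : C(K, ℝ) → ℝ, and continuous functions ψ_i ∈ C(Ω × [0,T], ℝ) for i = 1, …, n, such that sup_{f ∈ 𝒦} ‖ 𝒢(f) − Σ_{i=1}^n b_i(f)·ψ_i ‖_∞ < ε, where ‖u‖_∞ = sup_{(x,t) ∈ Ω × [0,T]} |u(x,t)|.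 -/
/-!
The identity of a normed space is uniformly approximated on a totally bounded set by a finite sum
`v ↦ ∑ i, ρ i v • c i` with continuous coefficients (the Schauder projection): take a partition of
unity `ρ` subordinate to finitely many `ε`-balls with centres `c i`, so that the sum is a convex
combination of centres within distance `ε` of `v`. Do this in the codomain of `𝒢`, on the image of
`𝒦`: the branch functionals are the pullbacks `ρ i ∘ 𝒢` and the trunk functions are the centres.
-/

open Metric Set

theorem exists_pos_subset_iUnion_ball_of_totallyBounded {X : Type*} [PseudoMetricSpace X]
    [Nonempty X] {S : Set X} (hS : TotallyBounded S) {ε : ℝ} (hε : 0 < ε) :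
    ∃ n : ℕ, 0 < n ∧ ∃ c : Fin n → X, S ⊆ ⋃ i, ball (c i) ε := by
  obtain ⟨t, ht, hcover⟩ := totallyBounded_iff.mp hS ε hε
  let x₀ : X := Classical.arbitrary X
  obtain ⟨n, c, -, hc⟩ := (ht.insert x₀).fin_param
  obtain ⟨i₀, -⟩ : x₀ ∈ range c := hc ▸ mem_insert x₀ t
  refine ⟨n, i₀.pos, c, ?_⟩
  rw [← biUnion_range (f := c) (g := fun x => ball x ε), hc]
  exact hcover.trans (biUnion_subset_biUnion_left (subset_insert x₀ t))

theorem exists_partitionOfUnity_isSubordinate_ball {X : Type*} [PseudoMetricSpace X] [Nonempty X]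
    {S : Set X} (hS : TotallyBounded S) {ε : ℝ} (hε : 0 < ε) :
    ∃ n : ℕ, 0 < n ∧ ∃ (c : Fin n → X) (ρ : PartitionOfUnity (Fin n) X (closure S)),
      ρ.IsSubordinate fun i => ball (c i) ε := by
  obtain ⟨n, hn, c, hcover⟩ := exists_pos_subset_iUnion_ball_of_totallyBounded hS.closure hε
  exact ⟨n, hn, c, PartitionOfUnity.exists_isSubordinate isClosed_closure _
    (fun _ => isOpen_ball) hcover⟩

theorem norm_sub_sum_smul_lt_of_isSubordinate_ball {ι E : Type*} [Fintype ι]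
    [SeminormedAddCommGroup E] [NormedSpace ℝ E] {S : Set E} {c : ι → E} {ε : ℝ}
    {ρ : PartitionOfUnity ι E S} (hρ : ρ.IsSubordinate fun i => ball (c i) ε) {v : E}
    (hv : v ∈ S) : ‖v - ∑ i, ρ i v • c i‖ < ε := by
  have sum_mem_ball : ∑ᶠ i, ρ i v • c i ∈ ball v ε :=
    ρ.finsum_smul_mem_convex (g := fun i _ => c i) hv
      (fun i hi => mem_ball_comm.mp (hρ i (subset_tsupport _ hi))) (convex_ball v ε)
  rwa [finsum_eq_sum_of_fintype, mem_ball', dist_eq_norm] at sum_mem_ball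

theorem deeponet_universal_approximation_general {X E : Type*} [TopologicalSpace X]
    [SeminormedAddCommGroup E] [NormedSpace ℝ E] {𝒢 : X → E} (h𝒢 : Continuous 𝒢)
    {𝒦 : Set X} (h𝒦 : TotallyBounded (𝒢 '' 𝒦)) {ε : ℝ} (hε : 0 < ε) :
    ∃ n : ℕ, 0 < n ∧ ∃ (b : Fin n → X → ℝ) (ψ : Fin n → E),
      (∀ i, Continuous (b i)) ∧ ∀ f ∈ 𝒦, ‖𝒢 f - ∑ i, b i f • ψ i‖ < ε := by
  obtain ⟨n, hn, c, ρ, hρ⟩ := exists_partitionOfUnity_isSubordinate_ball h𝒦 hε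
  exact ⟨n, hn, fun i => ρ i ∘ 𝒢, c, fun i => (ρ i).continuous.comp h𝒢, fun f hf =>
    norm_sub_sum_smul_lt_of_isSubordinate_ball hρ (subset_closure ⟨f, hf, rfl⟩)⟩

/-- **Universal approximation theorem for operators (branch–trunk / DeepONet form).**
Let `K ⊂ ℝ^d`, `Ω ⊂ ℝⁿ` be nonempty compact sets, `T > 0`, and let
`𝒢 : C(K, ℝ) → C(Ω × [0,T], ℝ)` be continuous with respect to the uniform norms.
Then for every compact `𝒦 ⊂ C(K, ℝ)` and every `ε > 0` there exist `n ≥ 1`,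
continuous functionals `b_i : C(K, ℝ) → ℝ` and continuous functions
`ψ_i ∈ C(Ω × [0,T], ℝ)` such that `‖𝒢 f - ∑ i, b_i f • ψ_i‖_∞ < ε` uniformly over
`f ∈ 𝒦` (equivalently, by compactness, strictly at every point of `Ω × [0,T]`). -/
theorem deeponet_universal_approximation {d m : ℕ}
    (K : Set (EuclideanSpace ℝ (Fin d))) (hKc : IsCompact K) (hKne : K.Nonempty)
    (Ω : Set (EuclideanSpace ℝ (Fin m))) (hΩc : IsCompact Ω) (hΩne : Ω.Nonempty)
    (T : ℝ) (hT : 0 < T)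
    (𝒢 : C(K, ℝ) → C(Ω × Set.Icc (0 : ℝ) T, ℝ)) (h𝒢 : Continuous 𝒢)
    (𝒦 : Set C(K, ℝ)) (h𝒦 : IsCompact 𝒦) (ε : ℝ) (hε : 0 < ε) :
    ∃ n : ℕ, 0 < n ∧
      ∃ (b : Fin n → (C(K, ℝ) → ℝ)) (ψ : Fin n → C(Ω × Set.Icc (0 : ℝ) T, ℝ)),
        (∀ i, Continuous (b i)) ∧
        ∀ f ∈ 𝒦, ∀ p : Ω × Set.Icc (0 : ℝ) T,
          |𝒢 f p - ∑ i, b i f * ψ i p| < ε := by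
  have : CompactSpace Ω := isCompact_iff_compactSpace.mp hΩc
  obtain ⟨n, hn, b, ψ, hb, happrox⟩ :=
    deeponet_universal_approximation_general h𝒢 (h𝒦.image h𝒢).totallyBounded hε
  refine ⟨n, hn, b, ψ, hb, fun f hf p => ?_⟩
  have hp : |(𝒢 f - ∑ i, b i f • ψ i) p| < ε :=
    (ContinuousMap.norm_coe_le_norm _ p).trans_lt (happrox f hf)
  simpa using hp
end
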